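/- Let n ≥ 1, let S_n act on ℝ^n by permuting coordinates, let C = { v ↦ x·v + y𝟙 : x, y ∈ ℝ } ⊆ Aff_{S_n}(ℝ^n, ℝ^n) be the width-1 convolutional layer space and P = { v ↦ (x_1 Id + x_2 𝟙𝟙ᵀ)v + y𝟙 : x_1, x_2, y ∈ ℝ } ⊆ Aff_{S_n}(ℝ^n, ℝ^n) the PointNet (DeepSets) layer space, where 𝟙 = (1,…,1)ᵀ. Assume σ : ℝ → ℝ is continuous and not a polynomial. Then U(C, P, C) = U(P, P, P) = C_{S_n}(ℝ^n, ℝ^n), the space of all continuous S_n-equivariant maps ℝ^n → ℝ^n. -/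

import Mathlib

open scoped BigOperators

noncomputable section EquivUnivPreamble

/-- Point-wise activation: apply `σ` coordinatewise. -/
def act (σ : ℝ → ℝ) {Z : Type} (v : Z → ℝ) : Z → ℝ := fun z => σ (v z)

/-- The action of a group element `g` on a real-valued function `v : Y → ℝ` induced by a
`G`-action on `Y` (the permutation representation `ℝ^Y`): `(g • v) y = v (g⁻¹ • y)`. -/
def pSMul {G Y : Type} [Group G] [MulAction G Y] (g : G) (v : Y → ℝ) : Y → ℝ :=
  fun y => v (g⁻¹ • y)

/-- `G`-equivariance of a map between permutation representations. -/
def Equivariant (G : Type) [Group G] {Y Z : Type} [MulAction G Y] [MulAction G Z]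
    (f : (Y → ℝ) → (Z → ℝ)) : Prop :=
  ∀ (g : G) (v : Y → ℝ), f (pSMul g v) = pSMul g (f v)

/-- A map between permutation representations is affine. -/
def IsAffine {Y Z : Type} (f : (Y → ℝ) → (Z → ℝ)) : Prop :=
  ∃ (φ : (Y → ℝ) →ₗ[ℝ] (Z → ℝ)) (b : Z → ℝ), ∀ v, f v = φ v + b

/-- A layer space: the set of maps `v ↦ ∑ᵢ cᵢ φⁱ(v) + b` where `φ¹, …, φᵏ` are fixed
`G`-equivariant linear maps and the bias `b` ranges over all functions constant on
`G`-orbits (i.e. all `∑ⱼ yⱼ 1_{Xⱼ}` with `Xⱼ` the orbits). -/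
def IsLayerSpace (G : Type) [Group G] {Y Z : Type} [MulAction G Y] [MulAction G Z]
    (M : Set ((Y → ℝ) → (Z → ℝ))) : Prop :=
  ∃ (k : ℕ) (φ : Fin k → ((Y → ℝ) →ₗ[ℝ] (Z → ℝ))),
    (∀ i, Equivariant G (φ i : (Y → ℝ) → (Z → ℝ))) ∧
    M = { f | ∃ (c : Fin k → ℝ) (b : Z → ℝ),
            (∀ (g : G) (z : Z), b (g • z) = b z) ∧
            ∀ v, f v = (∑ i, c i • φ i v) + b }

/-- `M^{k×h}`: the layer space `M` with input multiplicity `k` and output multiplicity `h`,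
`(v₁,…,v_k) ↦ (∑ⱼ f_{1,j}(vⱼ), …, ∑ⱼ f_{h,j}(vⱼ))`, identifying `V ⊗ ℝᵏ` with
`Fin k × Y → ℝ`. -/
def layerPow {Y Z : Type} (M : Set ((Y → ℝ) → (Z → ℝ))) (k h : ℕ) :
    Set ((Fin k × Y → ℝ) → (Fin h × Z → ℝ)) :=
  { F | ∃ f : Fin h → Fin k → ((Y → ℝ) → (Z → ℝ)),
      (∀ i j, f i j ∈ M) ∧
      ∀ (v : Fin k × Y → ℝ) (p : Fin h × Z), F v p = ∑ j, f p.1 j (fun y => v (j, y)) p.2 }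

/-- `M^{1×h}` under the canonical identification `V ⊗ ℝ¹ ≅ V` of the input. -/
def layerPowIn {Y Z : Type} (M : Set ((Y → ℝ) → (Z → ℝ))) (h : ℕ) :
    Set ((Y → ℝ) → (Fin h × Z → ℝ)) :=
  { F | ∃ f : Fin h → ((Y → ℝ) → (Z → ℝ)), (∀ i, f i ∈ M) ∧
      ∀ (v : Y → ℝ) (p : Fin h × Z), F v p = f p.1 v p.2 }

/-- `M^{k×1}` under the canonical identification `W ⊗ ℝ¹ ≅ W` of the output. -/
def layerPowOut {Y Z : Type} (M : Set ((Y → ℝ) → (Z → ℝ))) (k : ℕ) :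
    Set ((Fin k × Y → ℝ) → (Z → ℝ)) :=
  { F | ∃ f : Fin k → ((Y → ℝ) → (Z → ℝ)), (∀ j, f j ∈ M) ∧
      ∀ (v : Fin k × Y → ℝ) (z : Z), F v z = ∑ j, f j (fun y => v (j, y)) z }

/-- Evaluation of a chain of `d+1` layers with the point-wise activation `σ` between
consecutive layers: `φ_d ∘ σ̃ ∘ ⋯ ∘ σ̃ ∘ φ_0`. -/
def chainEval (σ : ℝ → ℝ) : ∀ (d : ℕ) (Y : Fin (d + 2) → Type)
    (φ : ∀ i : Fin (d + 1), (Y i.castSucc → ℝ) → (Y i.succ → ℝ)),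
    (Y 0 → ℝ) → (Y (Fin.last (d + 1)) → ℝ)
  | 0, _, φ => φ 0
  | (d + 1), Y, φ => fun v =>
      φ (Fin.last (d + 1))
        (act σ (chainEval σ d (fun i : Fin (d + 2) => Y i.castSucc)
          (fun i : Fin (d + 1) => φ i.castSucc) v))

/-- The neural space `N(M₀, …, M_d)` of a chain of `d+1` layer spaces. -/
def NeuralSpace (σ : ℝ → ℝ) (d : ℕ) (Y : Fin (d + 2) → Type)
    (M : ∀ i : Fin (d + 1), Set ((Y i.castSucc → ℝ) → (Y i.succ → ℝ))) :
    Set ((Y 0 → ℝ) → (Y (Fin.last (d + 1)) → ℝ)) :=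
  { F | ∃ φ : ∀ i : Fin (d + 1), (Y i.castSucc → ℝ) → (Y i.succ → ℝ),
      (∀ i, φ i ∈ M i) ∧ F = chainEval σ d Y φ }

/-- All networks `N(M₀^{1×k₁}, M₁^{k₁×k₂}, …, M_d^{k_d×k})` for the chain `M₀,…,M_d`, with
arbitrary interior multiplicities and fixed output multiplicity `k` (union over the interior
multiplicities). -/
def WPre (σ : ℝ → ℝ) : ∀ (d : ℕ) (Y : Fin (d + 2) → Type)
    (M : ∀ i : Fin (d + 1), Set ((Y i.castSucc → ℝ) → (Y i.succ → ℝ))) (k : ℕ),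
    Set ((Y 0 → ℝ) → (Fin k × Y (Fin.last (d + 1)) → ℝ))
  | 0, _, M, k => layerPowIn (M 0) k
  | (d + 1), Y, M, k =>
      { F | ∃ (k' : ℕ) (g : (Y 0 → ℝ) → (Fin k' × Y (Fin.last (d + 1)).castSucc → ℝ)),
          g ∈ WPre σ d (fun i : Fin (d + 2) => Y i.castSucc)
                (fun i : Fin (d + 1) => M i.castSucc) k' ∧
          ∃ f ∈ layerPow (M (Fin.last (d + 1))) k' k,
          F = fun v => f (act σ (g v)) }

/-- The network space `N(M₀^{1×k}, M₁^{k×k}, …, M_d^{k×k})`: all multiplicities equal to `k`. -/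
def WFix (σ : ℝ → ℝ) : ∀ (d : ℕ) (Y : Fin (d + 2) → Type)
    (M : ∀ i : Fin (d + 1), Set ((Y i.castSucc → ℝ) → (Y i.succ → ℝ))) (k : ℕ),
    Set ((Y 0 → ℝ) → (Fin k × Y (Fin.last (d + 1)) → ℝ))
  | 0, _, M, k => layerPowIn (M 0) k
  | (d + 1), Y, M, k =>
      { F | ∃ g ∈ WFix σ d (fun i : Fin (d + 2) => Y i.castSucc)
                (fun i : Fin (d + 1) => M i.castSucc) k,
          ∃ f ∈ layerPow (M (Fin.last (d + 1))) k k,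
          F = fun v => f (act σ (g v)) }

/-- Closure in the topology of uniform convergence on compact sets. -/
def UnifClosure {A B : Type} [TopologicalSpace A] [PseudoMetricSpace B]
    (S : Set (A → B)) : Set (A → B) :=
  { F | ∀ K : Set A, IsCompact K → ∀ ε : ℝ, 0 < ε → ∃ g ∈ S, ∀ x ∈ K, dist (F x) (g x) < ε }

/-- Separation relation of a family of functions. -/
def sepRel {A B : Type} (S : Set (A → B)) : Set (A × A) :=
  { p | ∀ f ∈ S, f p.1 = f p.2 }

/-- Entry-wise separation relation at the output entry `z`. -/
def sepRelAt {A Z : Type} (S : Set (A → (Z → ℝ))) (z : Z) : Set (A × A) :=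
  { p | ∀ f ∈ S, f p.1 z = f p.2 z }

/-- `C_ρ(A, B)`: continuous functions respecting the relation `ρ`. -/
def Crho {A B : Type} [TopologicalSpace A] [TopologicalSpace B] (ρ : Set (A × A)) :
    Set (A → B) :=
  { f | Continuous f ∧ ∀ p ∈ ρ, f p.1 = f p.2 }

/-- `C_ρ̄(A, ℝ^Z)` for a family of entry-wise relations `ρ̄ = (ρ_z)_{z ∈ Z}`. -/
def CrhoEntryRel {A Z : Type} [TopologicalSpace A] (ρ : Z → Set (A × A)) :
    Set (A → (Z → ℝ)) :=
  { f | Continuous f ∧ ∀ (z : Z), ∀ p ∈ ρ z, f p.1 z = f p.2 z }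

/-- `σ` is not a polynomial function. -/
def NotPolynomial (σ : ℝ → ℝ) : Prop :=
  ¬ ∃ p : Polynomial ℝ, ∀ x : ℝ, σ x = Polynomial.eval x p

/-- `c+1` widened copies of the layer space `M ⊆ Aff_G(ℝ^Z, ℝ^Z)`, from input multiplicity
`kin` to output multiplicity `kout` (union over interior multiplicities). -/
def WRep (σ : ℝ → ℝ) {Z : Type} (M : Set ((Z → ℝ) → (Z → ℝ))) :
    ∀ (_c kin kout : ℕ), Set ((Fin kin × Z → ℝ) → (Fin kout × Z → ℝ))
  | 0, kin, kout => layerPow M kin kout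
  | (c + 1), kin, kout =>
      { F | ∃ k, ∃ g ∈ WRep σ M c kin k, ∃ f ∈ layerPow M k kout,
          F = fun v => f (act σ (g v)) }

/-- `c+1` widened copies of `M`, starting at input multiplicity `kin` and ending with
output multiplicity `1` (canonically identified with `ℝ^Z`). -/
def WRepOut (σ : ℝ → ℝ) {Z : Type} (M : Set ((Z → ℝ) → (Z → ℝ))) :
    ∀ (_c kin : ℕ), Set ((Fin kin × Z → ℝ) → (Z → ℝ))
  | 0, kin => layerPowOut M kin
  | (c + 1), kin =>
      { F | ∃ k, ∃ g ∈ WRep σ M c kin k, ∃ f ∈ layerPowOut M k,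
          F = fun v => f (act σ (g v)) }

/-- `c+1` widened copies of `M`, with input multiplicity `1` (identified with `ℝ^Z`) and
output multiplicity `k`. -/
def WRepIn (σ : ℝ → ℝ) {Z : Type} (M : Set ((Z → ℝ) → (Z → ℝ))) :
    ∀ (_c k : ℕ), Set ((Z → ℝ) → (Fin k × Z → ℝ))
  | 0, k => layerPowIn M k
  | (c + 1), k =>
      { F | ∃ k', ∃ g ∈ WRepIn σ M c k', ∃ f ∈ layerPow M k' k,
          F = fun v => f (act σ (g v)) }

/-- The universality class `U(M, …, M)` of `c+2` copies of a layer space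
`M ⊆ Aff_G(ℝ^Z, ℝ^Z)`. -/
def UClassRep (σ : ℝ → ℝ) {Z : Type} [Fintype Z] (M : Set ((Z → ℝ) → (Z → ℝ))) (c : ℕ) :
    Set ((Z → ℝ) → (Z → ℝ)) :=
  UnifClosure { F | ∃ k, ∃ g ∈ WRepIn σ M c k, ∃ f ∈ layerPowOut M k,
      F = fun v => f (act σ (g v)) }

/-- The universality class `U(M₀, …, M_d, M, …, M)` of the chain `M₀, …, M_d` followed by
`c+1` copies of `M`. -/
def UClassPreRep (σ : ℝ → ℝ) (d : ℕ) (Y : Fin (d + 2) → Type)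
    [Fintype (Y (Fin.last (d + 1)))]
    (Mpre : ∀ i : Fin (d + 1), Set ((Y i.castSucc → ℝ) → (Y i.succ → ℝ)))
    (M : Set ((Y (Fin.last (d + 1)) → ℝ) → (Y (Fin.last (d + 1)) → ℝ))) (c : ℕ) :
    Set ((Y 0 → ℝ) → (Y (Fin.last (d + 1)) → ℝ)) :=
  UnifClosure { F | ∃ k, ∃ g ∈ WPre σ d Y Mpre k, ∃ f ∈ WRepOut σ M c k,
      F = fun v => f (act σ (g v)) }

/-- The universality class `U(M₀, …, M_d, N)` of the chain `M₀, …, M_d` followed by one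
extra layer space `N`. -/
def UClassApp1 (σ : ℝ → ℝ) (d : ℕ) (Y : Fin (d + 2) → Type)
    (M : ∀ i : Fin (d + 1), Set ((Y i.castSucc → ℝ) → (Y i.succ → ℝ)))
    {Z : Type} [Fintype Z]
    (N : Set ((Y (Fin.last (d + 1)) → ℝ) → (Z → ℝ))) : Set ((Y 0 → ℝ) → (Z → ℝ)) :=
  UnifClosure { F | ∃ k, ∃ g ∈ WPre σ d Y M k, ∃ f ∈ layerPowOut N k,
      F = fun v => f (act σ (g v)) }

/-- The universality class `U(M₀, …, M_d, N₁, N₂)` of the chain `M₀, …, M_d` followed by two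
extra layer spaces `N₁, N₂`. -/
def UClassApp2 (σ : ℝ → ℝ) (d : ℕ) (Y : Fin (d + 2) → Type)
    (M : ∀ i : Fin (d + 1), Set ((Y i.castSucc → ℝ) → (Y i.succ → ℝ)))
    {Z₁ Z₂ : Type} [Fintype Z₂]
    (N₁ : Set ((Y (Fin.last (d + 1)) → ℝ) → (Z₁ → ℝ)))
    (N₂ : Set ((Z₁ → ℝ) → (Z₂ → ℝ))) : Set ((Y 0 → ℝ) → (Z₂ → ℝ)) :=
  UnifClosure { F | ∃ k₁, ∃ g ∈ WPre σ d Y M k₁, ∃ k₂, ∃ m ∈ layerPow N₁ k₁ k₂,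
      ∃ f ∈ layerPowOut N₂ k₂, F = fun v => f (act σ (m (act σ (g v)))) }

/-- The universality class `U(M₁, M₂, M₃)` of three layer spaces on a common space `ℝ^Z`. -/
def UClass3 (σ : ℝ → ℝ) {Z : Type} [Fintype Z] (M₁ M₂ M₃ : Set ((Z → ℝ) → (Z → ℝ))) :
    Set ((Z → ℝ) → (Z → ℝ)) :=
  UnifClosure { F | ∃ k₁ k₂, ∃ g ∈ layerPowIn M₁ k₁, ∃ m ∈ layerPow M₂ k₁ k₂,
      ∃ f ∈ layerPowOut M₃ k₂, F = fun v => f (act σ (m (act σ (g v)))) }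

/-- The invariant layer space `I = Aff_G(ℝ^Y, ℝ)`: all `G`-invariant affine maps, with `ℝ`
realized as the trivial permutation representation `ℝ^{Unit}`. -/
def InvAff (G : Type) [Group G] {Y : Type} [MulAction G Y] :
    Set ((Y → ℝ) → (Unit → ℝ)) :=
  { f | IsAffine f ∧ ∀ (g : G) (v : Y → ℝ), f (pSMul g v) = f v }

/-- The fully connected layer space `L = Aff(ℝ, ℝ)`, with `ℝ` realized as `ℝ^{Unit}`. -/
def Lfull : Set ((Unit → ℝ) → (Unit → ℝ)) :=
  { f | ∃ a b : ℝ, f = fun v _ => a * v () + b }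

/-- The width-1 convolutional layer space `C ⊆ Aff_G(ℝ^X, ℝ^X)`:
`v ↦ a·v + (bias constant on `G`-orbits)`, i.e. `v ↦ a·v + ∑ⱼ yⱼ 1_{Xⱼ}`. -/
def ConvG (G : Type) [Group G] {X : Type} [MulAction G X] : Set ((X → ℝ) → (X → ℝ)) :=
  { f | ∃ (a : ℝ) (b : X → ℝ), (∀ (g : G) (z : X), b (g • z) = b z) ∧
      f = fun v z => a * v z + b z }

/-- The width-1 convolutional layer space for `S_n` acting on `ℝ^n`:
`C = { v ↦ a·v + b𝟙 }`. -/
def ConvC (n : ℕ) : Set ((Fin n → ℝ) → (Fin n → ℝ)) :=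
  { f | ∃ a b : ℝ, f = fun v i => a * v i + b }

/-- The PointNet (DeepSets) layer space for `S_n` acting on `ℝ^n`:
`P = { v ↦ (a·Id + c·𝟙𝟙ᵀ) v + b𝟙 }`. -/
def PointNetP (n : ℕ) : Set ((Fin n → ℝ) → (Fin n → ℝ)) :=
  { f | ∃ a c b : ℝ, f = fun v i => a * v i + c * (∑ j, v j) + b }
end EquivUnivPreamble

/-!
Continuity and equivariance of the layers pass to networks and to their locally uniform limits.
Conversely, fix a compact set `K` and view maps `ℝ^n → ℝ^n` as functions of `(v, i) ∈ K × Fin n`.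
Let `U` be the closure of the second-layer preactivations and `V` that of the networks, so that
`σ ∘ u ∈ V` for all `u ∈ U`.

A closed subspace which contains `σ(w h + b)` for all real `w` and `b` contains every power of `h`:
if `h ^ k` were missing, differentiation in the parameters would show that all iterated
differences of `σ` of order `k` vanish, so that `σ` would be a polynomial. By Stone–Weierstrass it
then contains `p ∘ h` for all continuous `p`. Therefore `U` contains `p (v i)` and `∑ l, q (v l)`,
and `V` contains `exp ∘ u` for all `u ∈ U`. The span of these exponentials is an algebra, so `V`
contains every continuous function which takes equal values at points not separated by `U`. If
`(v, i)` and `(w, j)` are such points, then `v i = w j` and `v` is a permutation of `w`, whence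
`F v i = F w j` for every equivariant `F`.
-/

section PolynomialFunctions

open Polynomial Filter Topology

lemma exists_derivative_eq_of_mem_degreeLT {R : Type*} [Field R] [CharZero R] {k : ℕ} {p : R[X]}
    (hp : p ∈ degreeLT R k) : ∃ P ∈ degreeLT R (k + 1), derivative P = p := by
  refine ⟨∑ i ∈ p.support, monomial (i + 1) (p.coeff i / (i + 1)),
    Submodule.sum_mem _ fun i hi => ?_, ?_⟩
  · have hik : i < k := WithBot.coe_lt_coe.1 <|
      (le_degree_of_mem_supp i hi).trans_lt (mem_degreeLT.1 hp)
    exact monomial_coe_mem_degreeLT (⟨i + 1, by lia⟩ : Fin (k + 1)) _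
  · rw [derivative_sum]
    conv_rhs => rw [p.as_sum_support]
    refine Finset.sum_congr rfl fun i _ => ?_
    rw [derivative_monomial, Nat.cast_succ, div_mul_cancel₀ _ i.cast_add_one_ne_zero,
      Nat.add_sub_cancel]

/-- The space of real polynomial functions of degree less than `k`. It lives in `ℝ → ℝ`, whose
topology is that of pointwise convergence. -/
noncomputable def polyFunLT (k : ℕ) : Submodule ℝ (ℝ → ℝ) :=
  (degreeLT ℝ k).map (LinearMap.pi fun x => leval x)

lemma mem_polyFunLT {k : ℕ} {f : ℝ → ℝ} :
    f ∈ polyFunLT k ↔ ∃ p ∈ degreeLT ℝ k, ∀ x, f x = p.eval x := by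
  simp only [polyFunLT, Submodule.mem_map, funext_iff, LinearMap.pi_apply, leval_apply, eq_comm]

lemma isClosed_polyFunLT (k : ℕ) : IsClosed (polyFunLT k : Set (ℝ → ℝ)) := by
  have : FiniteDimensional ℝ (degreeLT ℝ k) := (degreeLTEquiv ℝ k).symm.finiteDimensional
  have : FiniteDimensional ℝ (polyFunLT k) := inferInstanceAs
    (FiniteDimensional ℝ ((degreeLT ℝ k).map (LinearMap.pi fun x => leval x)))
  exact (polyFunLT k).closed_of_finiteDimensional

lemma mem_polyFunLT_succ_of_hasDerivAt {k : ℕ} {f f' : ℝ → ℝ} (hf' : f' ∈ polyFunLT k)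
    (hf : ∀ x, HasDerivAt f (f' x) x) : f ∈ polyFunLT (k + 1) := by
  obtain ⟨p, hp, hpf'⟩ := mem_polyFunLT.1 hf'
  obtain ⟨P, hP, rfl⟩ := exists_derivative_eq_of_mem_degreeLT hp
  have hsub : ∀ x, HasDerivAt (fun x => f x - P.eval x) 0 x := fun x =>
    ((hf x).sub (P.hasDerivAt x)).congr_deriv (sub_eq_zero.2 (hpf' x))
  have hconst := is_const_of_deriv_eq_zero (fun x => (hsub x).differentiableAt)
    fun x => (hsub x).deriv
  refine mem_polyFunLT.2 ⟨P + C (f 0 - P.eval 0), add_mem hP ?_, fun x => ?_⟩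
  · exact monomial_coe_mem_degreeLT (0 : Fin (k + 1)) _
  · rw [eval_add, eval_C, hconst 0 x, add_sub_cancel]

lemma exists_hasDerivAt_of_continuous {f : ℝ → ℝ} (hf : Continuous f) :
    ∃ F : C(ℝ, ℝ), ∀ x, HasDerivAt F (f x) x := by
  have hF : ∀ x, HasDerivAt (fun x => ∫ t in (0 : ℝ)..x, f t) (f x) x := fun x =>
    (hf.integral_hasStrictDerivAt 0 x).hasDerivAt
  exact ⟨⟨_, continuous_iff_continuousAt.2 fun x => (hF x).continuousAt⟩, hF⟩

lemma mem_polyFunLT_succ_of_forall_sub_mem {k : ℕ} {f : ℝ → ℝ} (hf : Continuous f)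
    (hsub : ∀ δ, (fun x => f (x + δ) - f x) ∈ polyFunLT k) : f ∈ polyFunLT (k + 1) := by
  obtain ⟨F, hF⟩ := exists_hasDerivAt_of_continuous hf
  have hFsub : ∀ δ, (fun x => F (x + δ) - F x) ∈ polyFunLT (k + 1) := fun δ =>
    mem_polyFunLT_succ_of_hasDerivAt (hsub δ) fun x =>
      ((hF (x + δ)).comp_add_const x δ).sub (hF x)
  have hlim : Tendsto (fun δ : ℝ => δ⁻¹ • fun x => F (x + δ) - F x) (𝓝[≠] 0) (𝓝 f) :=
    tendsto_pi_nhds.2 fun x => hasDerivAt_iff_tendsto_slope_zero.1 (hF x)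
  exact (isClosed_polyFunLT (k + 1)).mem_of_tendsto hlim
    (Eventually.of_forall fun δ => Submodule.smul_mem _ _ (hFsub δ))

end PolynomialFunctions

section ClosedSubspaces

variable {E : Type*} [NormedAddCommGroup E] [NormedSpace ℝ E] {V : Submodule ℝ E}

lemma mem_of_hasDerivAt_of_forall_mem (hV : IsClosed (V : Set E)) {γ : ℝ → E} {γ' : E} {t : ℝ}
    (hγ : HasDerivAt γ γ' t) (hmem : ∀ s, γ s ∈ V) : γ' ∈ V :=
  hV.mem_of_tendsto hγ.tendsto_slope (Filter.Eventually.of_forall fun s =>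
    V.smul_mem _ (V.sub_mem (hmem s) (hmem t)))

lemma sub_mem_of_hasDerivAt_mem (hV : IsClosed (V : Set E)) {γ γ' : ℝ → E}
    (hγ : ∀ t, HasDerivAt γ (γ' t) t) (hmem : ∀ t, γ' t ∈ V) (a b : ℝ) : γ b - γ a ∈ V := by
  have hderiv : ∀ t, HasDerivAt (V.mkQL ∘ γ) 0 t := fun t => by
    have := V.mkQL.hasFDerivAt.comp_hasDerivAt t (hγ t)
    simpa [(Submodule.Quotient.mk_eq_zero V).2 (hmem t)] using this
  have hconst := is_const_of_deriv_eq_zero (fun t => (hderiv t).differentiableAt)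
    (fun t => (hderiv t).deriv) b a
  exact (Submodule.Quotient.eq V).1 hconst

end ClosedSubspaces

section RidgeFunctions

open ContinuousMap

variable {X : Type*} [TopologicalSpace X] [CompactSpace X]

lemma hasDerivAt_continuousMap_of_forall_apply {E : Type*} [NormedAddCommGroup E] [NormedSpace ℝ E]
    [CompleteSpace E] {γ γ' : ℝ → C(X, E)} (hγ' : Continuous γ')
    (hγ : ∀ x t, HasDerivAt (fun s => γ s x) (γ' t x) t) (t : ℝ) : HasDerivAt γ (γ' t) t := by
  have hftc : γ = fun s => (∫ r in (0 : ℝ)..s, γ' r) + γ 0 := by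
    ext s x
    have heval : (∫ r in (0 : ℝ)..s, γ' r) x = ∫ r in (0 : ℝ)..s, γ' r x :=
      ((evalCLM ℝ x).intervalIntegral_comp_comm (hγ'.intervalIntegrable 0 s)).symm
    have hcont : Continuous fun r => γ' r x := (evalCLM ℝ x).continuous.comp hγ'
    rw [ContinuousMap.add_apply, heval, intervalIntegral.integral_eq_sub_of_hasDerivAt
      (fun r _ => hγ x r) (hcont.intervalIntegrable 0 s), sub_add_cancel]
  rw [hftc]
  exact ((hγ'.integral_hasStrictDerivAt 0 t).hasDerivAt).add_const (γ 0)

lemma hasDerivAt_mul_comp_add_smul {f F : C(ℝ, ℝ)} (hF : ∀ x, HasDerivAt F (f x) x)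
    (q u k : C(X, ℝ)) (t : ℝ) :
    HasDerivAt (fun t : ℝ => q * F.comp (u + t • k)) (q * k * f.comp (u + t • k)) t := by
  refine hasDerivAt_continuousMap_of_forall_apply
    (γ' := fun t => q * k * f.comp (u + t • k)) ?_ (fun x t => ?_) t
  · exact continuous_const.mul (continuous_postcomp f |>.comp (by fun_prop))
  · have haffine : HasDerivAt (fun s : ℝ => u x + s * k x) (k x) t := by
      simpa using ((hasDerivAt_id t).mul_const (k x)).const_add (u x)
    refine (((hF _).comp t haffine).const_mul (q x)).congr_deriv ?_
    simp only [mul_apply, comp_apply, ContinuousMap.add_apply, ContinuousMap.smul_apply,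
      smul_eq_mul]
    ring

variable {V : Submodule ℝ C(X, ℝ)}

/-- The increment of a primitive `F` of `f` in the direction of the bias lies in `V`, hence so
does the derivative of that increment in the direction of the weight. -/
lemma mul_comp_sub_comp_mem (hV : IsClosed (V : Set C(X, ℝ))) {q h : C(X, ℝ)} {f : C(ℝ, ℝ)}
    (hmem : ∀ w b : ℝ, q * f.comp (w • h + const X b) ∈ V) (δ w b : ℝ) :
    q * h * (f.comp (w • h + const X (b + δ)) - f.comp (w • h + const X b)) ∈ V := by
  obtain ⟨F, hF⟩ := exists_hasDerivAt_of_continuous f.continuous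
  have hbias : ∀ w : ℝ,
      q * F.comp (w • h + const X (b + δ)) - q * F.comp (w • h + const X b) ∈ V := by
    intro w
    have hd := hasDerivAt_mul_comp_add_smul hF q (w • h) 1
    simp only [mul_one] at hd
    have hone : ∀ b : ℝ, const X b = b • (1 : C(X, ℝ)) := fun b => by ext; simp
    simp only [hone] at hmem ⊢
    exact sub_mem_of_hasDerivAt_mem hV hd (fun t => hmem w t) b (b + δ)
  have hd := (hasDerivAt_mul_comp_add_smul hF q (const X (b + δ)) h w).sub
    (hasDerivAt_mul_comp_add_smul hF q (const X b) h w)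
  have := mem_of_hasDerivAt_of_forall_mem hV hd fun w => by
    simpa only [Pi.sub_apply, add_comm (const X _)] using hbias w
  simpa only [mul_sub, add_comm (const X _)] using this

lemma mul_pow_mem_or_mem_polyFunLT (hV : IsClosed (V : Set C(X, ℝ))) (h : C(X, ℝ)) (k : ℕ)
    (q : C(X, ℝ)) (f : C(ℝ, ℝ)) (hmem : ∀ w b : ℝ, q * f.comp (w • h + const X b) ∈ V) :
    q * h ^ k ∈ V ∨ ⇑f ∈ polyFunLT k := by
  induction k generalizing q f with
  | zero =>
    by_cases hf : ∃ b, f b ≠ 0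
    · obtain ⟨b, hb⟩ := hf
      left
      convert V.smul_mem (f b)⁻¹ (hmem 0 b) using 1
      ext x
      simp [field]
    · right
      push Not at hf
      rw [show ⇑f = 0 from funext hf]
      exact zero_mem _
  | succ k ih =>
    refine or_iff_not_imp_left.2 fun hq => mem_polyFunLT_succ_of_forall_sub_mem f.continuous
      fun δ => ?_
    let Δf : C(ℝ, ℝ) := ⟨fun x => f (x + δ) - f x, by fun_prop⟩
    refine (ih (q * h) Δf fun w b => ?_).resolve_left (by rwa [mul_assoc, ← pow_succ'])
    convert mul_comp_sub_comp_mem hV hmem δ w b using 2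
    ext x
    simp [Δf, add_assoc]

lemma pow_mem_of_forall_comp_affine_mem {σ : C(ℝ, ℝ)} (hσ : NotPolynomial σ)
    (hV : IsClosed (V : Set C(X, ℝ))) {h : C(X, ℝ)}
    (hmem : ∀ w b : ℝ, σ.comp (w • h + const X b) ∈ V) (k : ℕ) : h ^ k ∈ V := by
  have hpoly : ⇑σ ∉ polyFunLT k := fun hk =>
    let ⟨p, _, hp⟩ := mem_polyFunLT.1 hk
    hσ ⟨p, hp⟩
  simpa using (mul_pow_mem_or_mem_polyFunLT hV h k 1 σ (by simpa using hmem)).resolve_right hpoly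

end RidgeFunctions

section StoneWeierstrass

open ContinuousMap Set Topology

variable {X : Type*} [TopologicalSpace X] [CompactSpace X]

/-- The set of values of all elements of `A` is a compact Hausdorff quotient of `X` on which `A`
separates points, and `f` descends to it. -/
lemma mem_topologicalClosure_of_forall_eq_imp_eq (A : Subalgebra ℝ C(X, ℝ)) {f : C(X, ℝ)}
    (hf : ∀ x y, (∀ g ∈ A, g x = g y) → f x = f y) : f ∈ A.topologicalClosure := by
  let values : C(X, A → ℝ) := ⟨fun x g => g.1 x, continuous_pi fun g => g.1.continuous⟩
  let π : C(X, range values) := ⟨rangeFactorization values, values.continuous.subtype_mk _⟩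
  have hπ : IsQuotientMap π :=
    π.continuous.isClosedMap.isQuotientMap π.continuous rangeFactorization_surjective
  have : CompactSpace (range values) := isCompact_iff_compactSpace.1
    (isCompact_range values.continuous)
  have hfactors : Function.FactorsThrough f π := fun x y hxy =>
    hf x y fun g hg => congrFun (congrArg Subtype.val hxy) ⟨g, hg⟩
  let B : Subalgebra ℝ C(range values, ℝ) := A.comap (compRightAlgHom ℝ ℝ π)
  have hB : B.SeparatesPoints := by
    intro y z hyz
    obtain ⟨g, hg⟩ := Function.ne_iff.1 (Subtype.coe_injective.ne hyz)
    let evalAt : C(range values, ℝ) :=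
      ⟨fun y => y.1 g, (continuous_apply g).comp continuous_subtype_val⟩
    have hevalAt : compRightAlgHom ℝ ℝ π evalAt = g := rfl
    exact ⟨evalAt, ⟨evalAt, by simp [B, hevalAt], rfl⟩, hg⟩
  have hlift : hπ.lift f hfactors ∈ B.topologicalClosure :=
    subalgebra_topologicalClosure_eq_top_of_separatesPoints B hB ▸ Algebra.mem_top
  rw [← hπ.lift_comp f hfactors]
  exact map_mem_closure (f := fun u : C(range values, ℝ) => u.comp π) (continuous_precomp π)
    hlift fun _ hg => hg

lemma comp_mem_of_forall_comp_affine_mem {σ : C(ℝ, ℝ)} (hσ : NotPolynomial σ)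
    {V : Submodule ℝ C(X, ℝ)} (hV : IsClosed (V : Set C(X, ℝ))) {h : C(X, ℝ)}
    (hmem : ∀ w b : ℝ, σ.comp (w • h + const X b) ∈ V) (ρ : C(ℝ, ℝ)) : ρ.comp h ∈ V := by
  have hadjoin : (Algebra.adjoin ℝ {h}).toSubmodule ≤ V := by
    rw [Algebra.adjoin_eq_span, Submodule.span_le]
    intro g hg
    obtain ⟨k, rfl⟩ := Submonoid.mem_closure_singleton.1 hg
    exact pow_mem_of_forall_comp_affine_mem hσ hV hmem k
  exact closure_minimal hadjoin hV <| mem_topologicalClosure_of_forall_eq_imp_eq _ fun x y hxy =>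
    congrArg ρ (hxy h (Algebra.self_mem_adjoin_singleton ℝ h))

/-- The functions `exp ∘ u` with `u ∈ U`. They are closed under multiplication because `U` is closed
under addition, so their linear span is an algebra. -/
def expSubmonoid (U : Submodule ℝ C(X, ℝ)) : Submonoid C(X, ℝ) where
  carrier := (fun u => (⟨Real.exp, Real.continuous_exp⟩ : C(ℝ, ℝ)).comp u) '' U
  one_mem' := ⟨0, zero_mem U, by ext; simp⟩
  mul_mem' := by
    rintro _ _ ⟨u, hu, rfl⟩ ⟨v, hv, rfl⟩
    exact ⟨u + v, add_mem hu hv, by ext; simp [Real.exp_add]⟩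

theorem mem_of_forall_comp_mem_of_forall_eq_imp_eq {σ : C(ℝ, ℝ)} (hσ : NotPolynomial σ)
    {U V : Submodule ℝ C(X, ℝ)} (hU : 1 ∈ U) (hV : IsClosed (V : Set C(X, ℝ)))
    (hUV : ∀ u ∈ U, σ.comp u ∈ V) {f : C(X, ℝ)}
    (hf : ∀ x y, (∀ u ∈ U, u x = u y) → f x = f y) : f ∈ V := by
  have hcomp : ∀ u ∈ U, ∀ ρ : C(ℝ, ℝ), ρ.comp u ∈ V := fun u hu =>
    comp_mem_of_forall_comp_affine_mem hσ hV fun w b => hUV _ <| by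
      rw [show const X b = b • 1 by ext; simp]
      exact add_mem (U.smul_mem w hu) (U.smul_mem b hU)
  have hadjoin : (Algebra.adjoin ℝ (expSubmonoid U : Set C(X, ℝ))).toSubmodule ≤ V := by
    rw [Algebra.adjoin_eq_span, Submonoid.closure_eq, Submodule.span_le]
    rintro _ ⟨u, hu, rfl⟩
    exact hcomp u hu _
  refine closure_minimal hadjoin hV <| mem_topologicalClosure_of_forall_eq_imp_eq _
    fun x y hxy => hf x y fun u hu => Real.exp_injective ?_
  exact hxy _ (Algebra.subset_adjoin ⟨u, hu, rfl⟩)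

end StoneWeierstrass

section UniformClosure

variable {A B : Type} [TopologicalSpace A] [PseudoMetricSpace B] {S T : Set (A → B)} {F : A → B}

lemma UnifClosure_mono (h : S ⊆ T) : UnifClosure S ⊆ UnifClosure T := fun _ hF K hK ε hε =>
  let ⟨g, hg, hd⟩ := hF K hK ε hε
  ⟨g, h hg, hd⟩

lemma continuous_of_mem_UnifClosure [LocallyCompactSpace A] (hS : ∀ g ∈ S, Continuous g)
    (hF : F ∈ UnifClosure S) : Continuous F := by
  refine continuous_of_locally_uniform_approx_of_continuousAt fun x u hu => ?_
  obtain ⟨ε, hε, hεu⟩ := Metric.mem_uniformity_dist.1 hu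
  obtain ⟨K, hK, hxK⟩ := exists_compact_mem_nhds x
  obtain ⟨g, hg, hd⟩ := hF K hK ε hε
  exact ⟨K, hxK, g, (hS g hg).continuousAt, fun y hy => hεu (hd y hy)⟩

lemma rel_of_mem_UnifClosure {R : Set (B × B)} (hR : IsClosed R) {x y : A}
    (hS : ∀ g ∈ S, (g x, g y) ∈ R) (hF : F ∈ UnifClosure S) : (F x, F y) ∈ R := by
  refine hR.closure_subset (Metric.mem_closure_iff.2 fun ε hε => ?_)
  obtain ⟨g, hg, hd⟩ := hF {x, y} (Set.toFinite _).isCompact ε hε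
  exact ⟨_, hS g hg, max_lt (hd x (by simp)) (hd y (by simp))⟩

end UniformClosure

section Equivariance

variable {G X Y Z : Type} [Group G] [MulAction G X] [MulAction G Y] [MulAction G Z]

lemma Equivariant.comp {f : (Y → ℝ) → (Z → ℝ)} {h : (X → ℝ) → (Y → ℝ)} (hf : Equivariant G f)
    (hh : Equivariant G h) : Equivariant G (fun v => f (h v)) := fun g v =>
  (congrArg f (hh g v)).trans (hf g (h v))

lemma Equivariant.sum {ι : Type*} {s : Finset ι} {f : ι → (Y → ℝ) → (Z → ℝ)}
    (hf : ∀ i ∈ s, Equivariant G (f i)) : Equivariant G (fun v => ∑ i ∈ s, f i v) := fun g v =>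
  (Finset.sum_congr rfl fun i hi => hf i hi g v).trans <| funext fun z => by
    simp only [pSMul, Finset.sum_apply]

lemma equivariant_act (σ : ℝ → ℝ) : Equivariant G (act σ : (Y → ℝ) → (Y → ℝ)) := fun _ _ => rfl

lemma equivariant_of_mem_UnifClosure [Fintype Z] {S : Set ((Y → ℝ) → (Z → ℝ))}
    (hS : ∀ f ∈ S, Equivariant G f) {F : (Y → ℝ) → (Z → ℝ)} (hF : F ∈ UnifClosure S) :
    Equivariant G F := fun g v => by
  have hcont : Continuous (pSMul g : (Z → ℝ) → (Z → ℝ)) :=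
    continuous_pi fun z => continuous_apply (g⁻¹ • z)
  exact rel_of_mem_UnifClosure (R := {p | p.1 = pSMul g p.2})
    (isClosed_eq continuous_fst (hcont.comp continuous_snd)) (fun f hf => hS f hf g v) hF

variable {ι : Type}

lemma Equivariant.map_comp_perm {F : (ι → ℝ) → (ι → ℝ)} (hF : Equivariant (Equiv.Perm ι) F)
    (e : Equiv.Perm ι) (v : ι → ℝ) : F (v ∘ e) = F v ∘ e :=
  hF e⁻¹ v

lemma Equivariant.apply_eq_of_apply_eq {F : (ι → ℝ) → (ι → ℝ)}
    (hF : Equivariant (Equiv.Perm ι) F) {w : ι → ℝ} {i j : ι} (hij : w i = w j) :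
    F w i = F w j := by
  classical
  have hw : w ∘ Equiv.swap i j = w := funext fun k => Equiv.apply_swap_eq_self hij k
  simpa [hw] using congrFun (hF.map_comp_perm (Equiv.swap i j) w) i

end Equivariance

lemma exists_perm_comp_eq_of_sum_eval_eq {ι k : Type*} [Fintype ι] [Field k] [CharZero k]
    {v w : ι → k} (h : ∀ p : Polynomial k, ∑ l, p.eval (v l) = ∑ l, p.eval (w l)) :
    ∃ e : Equiv.Perm ι, w ∘ e = v := by
  classical
  have hcard : ∀ x, Fintype.card {l // v l = x} = Fintype.card {l // w l = x} := by
    intro x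
    let s : Finset k := insert x (Finset.univ.image v ∪ Finset.univ.image w)
    have hbasis : ∀ y ∈ s, (Lagrange.basis s id x).eval y = if y = x then 1 else 0 := by
      intro y hy
      split_ifs with hyx
      · exact hyx ▸ Lagrange.eval_basis_self Function.injective_id.injOn hy
      · exact Lagrange.eval_basis_of_ne (v := id) (Ne.symm hyx) hy
    have hsum := h (Lagrange.basis s id x)
    rw [Finset.sum_congr rfl fun l _ => hbasis (v l) (by simp [s]),
      Finset.sum_congr rfl fun l _ => hbasis (w l) (by simp [s])] at hsum
    simpa only [Finset.sum_boole, Nat.cast_inj, Fintype.card_subtype] using hsum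
  exact ⟨Equiv.ofFiberEquiv fun x => Fintype.equivOfCardEq (hcard x),
    funext fun l => Equiv.ofFiberEquiv_map _ l⟩

section ThreeLayerNetworks

variable {Z : Type} {σ : ℝ → ℝ} {M₁ M₂ M₃ N₁ N₂ N₃ : Set ((Z → ℝ) → (Z → ℝ))}
  {F : (Z → ℝ) → (Z → ℝ)}

/-- The networks `φ³ ∘ σ̃ ∘ φ² ∘ σ̃ ∘ φ¹` with `φ¹ ∈ M₁^{1×k₁}`, `φ² ∈ M₂^{k₁×k₂}` and
`φ³ ∈ M₃^{k₂×1}` for some `k₁` and `k₂`; `UClass3` is the closure of this set. -/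
def threeLayerNetworks (σ : ℝ → ℝ) (M₁ M₂ M₃ : Set ((Z → ℝ) → (Z → ℝ))) :
    Set ((Z → ℝ) → (Z → ℝ)) :=
  { F | ∃ k₁ k₂, ∃ g ∈ layerPowIn M₁ k₁, ∃ m ∈ layerPow M₂ k₁ k₂,
      ∃ f ∈ layerPowOut M₃ k₂, F = fun v => f (act σ (m (act σ (g v)))) }

lemma mem_threeLayerNetworks :
    F ∈ threeLayerNetworks σ M₁ M₂ M₃ ↔
      ∃ (k₁ k₂ : ℕ) (g : Fin k₁ → (Z → ℝ) → (Z → ℝ)) (m : Fin k₂ → Fin k₁ → (Z → ℝ) → (Z → ℝ))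
        (f : Fin k₂ → (Z → ℝ) → (Z → ℝ)),
        (∀ i, g i ∈ M₁) ∧ (∀ j i, m j i ∈ M₂) ∧ (∀ j, f j ∈ M₃) ∧
        F = fun v => ∑ j, f j (act σ (∑ i, m j i (act σ (g i v)))) := by
  constructor
  · rintro ⟨k₁, k₂, g', ⟨g, hg, hg'⟩, m', ⟨m, hm, hm'⟩, f', ⟨f, hf, hf'⟩, rfl⟩
    refine ⟨k₁, k₂, g, m, f, hg, hm, hf, ?_⟩
    ext v z
    rw [hf', Finset.sum_apply]
    refine Finset.sum_congr rfl fun j _ => congrArg (f j · z) (funext fun y => ?_)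
    simp only [act, hm', hg', Finset.sum_apply]
    rfl
  · rintro ⟨k₁, k₂, g, m, f, hg, hm, hf, rfl⟩
    refine ⟨k₁, k₂, _, ⟨g, hg, fun _ _ => rfl⟩, _, ⟨m, hm, fun _ _ => rfl⟩, _,
      ⟨f, hf, fun _ _ => rfl⟩, ?_⟩
    ext v z
    rw [Finset.sum_apply]
    refine Finset.sum_congr rfl fun j _ => congrArg (f j · z) (funext fun y => ?_)
    simp only [act, Finset.sum_apply]
    rfl

lemma threeLayerNetworks_mono (h₁ : M₁ ⊆ N₁) (h₂ : M₂ ⊆ N₂) (h₃ : M₃ ⊆ N₃) :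
    threeLayerNetworks σ M₁ M₂ M₃ ⊆ threeLayerNetworks σ N₁ N₂ N₃ := fun F hF => by
  obtain ⟨k₁, k₂, g, m, f, hg, hm, hf, rfl⟩ := mem_threeLayerNetworks.1 hF
  exact mem_threeLayerNetworks.2 ⟨k₁, k₂, g, m, f, fun i => h₁ (hg i), fun j i => h₂ (hm j i),
    fun j => h₃ (hf j), rfl⟩

lemma UClass3_mono [Fintype Z] (h₁ : M₁ ⊆ N₁) (h₂ : M₂ ⊆ N₂) (h₃ : M₃ ⊆ N₃) :
    UClass3 σ M₁ M₂ M₃ ⊆ UClass3 σ N₁ N₂ N₃ :=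
  UnifClosure_mono (threeLayerNetworks_mono h₁ h₂ h₃)

lemma continuous_of_mem_UClass3 [Fintype Z] (hσ : Continuous σ) (h₁ : ∀ f ∈ M₁, Continuous f)
    (h₂ : ∀ f ∈ M₂, Continuous f) (h₃ : ∀ f ∈ M₃, Continuous f) (hF : F ∈ UClass3 σ M₁ M₂ M₃) :
    Continuous F := by
  refine continuous_of_mem_UnifClosure (fun F hF => ?_) hF
  obtain ⟨k₁, k₂, g, m, f, hg, hm, hf, rfl⟩ := mem_threeLayerNetworks.1 hF
  have hact : Continuous (act σ : (Z → ℝ) → (Z → ℝ)) :=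
    continuous_pi fun z => hσ.comp (continuous_apply z)
  exact continuous_finsetSum _ fun j _ => (h₃ _ (hf j)).comp <| hact.comp <|
    continuous_finsetSum _ fun i _ => (h₂ _ (hm j i)).comp <| hact.comp (h₁ _ (hg i))

lemma equivariant_of_mem_UClass3 {G : Type} [Group G] [MulAction G Z] [Fintype Z]
    (h₁ : ∀ f ∈ M₁, Equivariant G f) (h₂ : ∀ f ∈ M₂, Equivariant G f)
    (h₃ : ∀ f ∈ M₃, Equivariant G f) (hF : F ∈ UClass3 σ M₁ M₂ M₃) : Equivariant G F := by
  refine equivariant_of_mem_UnifClosure (fun F hF => ?_) hF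
  obtain ⟨k₁, k₂, g, m, f, hg, hm, hf, rfl⟩ := mem_threeLayerNetworks.1 hF
  exact .sum fun j _ => (h₃ _ (hf j)).comp <| (equivariant_act σ).comp <|
    .sum fun i _ => (h₂ _ (hm j i)).comp <| (equivariant_act σ).comp (h₁ _ (hg i))

end ThreeLayerNetworks

section LayerSpan

variable {A Y Z : Type} {σ : ℝ → ℝ} {M : Set ((Y → ℝ) → (Z → ℝ))} {S : Set (A → Y → ℝ)}

/-- The linear span of the maps `m ∘ σ̃ ∘ h` with `m ∈ M` and `h ∈ S`, that is, the maps obtained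
from those in `S` by appending the activation and one layer from `M` of arbitrary width. -/
def layerSpan (σ : ℝ → ℝ) (M : Set ((Y → ℝ) → (Z → ℝ))) (S : Set (A → Y → ℝ)) :
    Submodule ℝ (A → Z → ℝ) :=
  Submodule.span ℝ (Set.image2 (fun m h v => m (act σ (h v))) M S)

lemma comp_act_comp_mem_layerSpan {m : (Y → ℝ) → (Z → ℝ)} (hm : m ∈ M) {h : A → Y → ℝ}
    (hh : h ∈ S) : (fun v => m (act σ (h v))) ∈ layerSpan σ M S :=
  Submodule.subset_span ⟨m, hm, h, hh, rfl⟩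

lemma exists_sum_of_mem_layerSpan (hM : ∀ (c : ℝ), ∀ m ∈ M, c • m ∈ M) {F : A → Z → ℝ}
    (hF : F ∈ layerSpan σ M S) :
    ∃ (k : ℕ) (m : Fin k → (Y → ℝ) → (Z → ℝ)) (h : Fin k → A → Y → ℝ),
      (∀ i, m i ∈ M) ∧ (∀ i, h i ∈ S) ∧ F = fun v => ∑ i, m i (act σ (h i v)) := by
  obtain ⟨k, c, F', rfl⟩ := Submodule.mem_span_set'.1 hF
  choose m hm h hh hF' using fun i => (F' i).2
  refine ⟨k, fun i => c i • m i, h, fun i => hM _ _ (hm i), hh, ?_⟩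
  ext v z
  simp only [← hF', Finset.sum_apply, Pi.smul_apply]

lemma mem_threeLayerNetworks_of_mem_layerSpan_layerSpan {M₁ M₂ M₃ : Set ((Z → ℝ) → (Z → ℝ))}
    (h₂ : ∀ (c : ℝ), ∀ m ∈ M₂, c • m ∈ M₂) (h₃ : ∀ (c : ℝ), ∀ m ∈ M₃, c • m ∈ M₃)
    {F : (Z → ℝ) → (Z → ℝ)} (hF : F ∈ layerSpan σ M₃ (layerSpan σ M₂ M₁ : Set _)) :
    F ∈ threeLayerNetworks σ M₁ M₂ M₃ := by
  obtain ⟨k₂, f, h, hf, hh, rfl⟩ := exists_sum_of_mem_layerSpan h₃ hF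
  choose k m g hm hg hsum using fun j => exists_sum_of_mem_layerSpan h₂ (hh j)
  -- The subnetworks `h j` are put side by side, with a block diagonal second layer.
  let e : Fin (∑ j, k j) ≃ Σ j, Fin (k j) := finSigmaFinEquiv.symm
  refine mem_threeLayerNetworks.2 ⟨∑ j, k j, k₂, fun p => g (e p).1 (e p).2,
    fun j p => (if (e p).1 = j then (1 : ℝ) else 0) • m (e p).1 (e p).2, f,
    fun p => hg _ _, fun j p => h₂ _ _ (hm _ _), hf, ?_⟩
  ext v : 1
  refine Finset.sum_congr rfl fun j _ => congrArg (fun u => f j (act σ u)) ?_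
  calc h j v
      = ∑ a, ∑ i, (if a = j then (1 : ℝ) else 0) • m a i (act σ (g a i v)) := by
        rw [Fintype.sum_eq_single j fun a ha => by simp [ha], hsum]
        simp
    _ = ∑ q : Σ j, Fin (k j), (if q.1 = j then (1 : ℝ) else 0) •
          m q.1 q.2 (act σ (g q.1 q.2 v)) := by rw [Fintype.sum_sigma]
    _ = _ := (Equiv.sum_comp e _).symm

end LayerSpan

section Restriction

open ContinuousMap

section SumCoord

variable (X Z : Type*) [TopologicalSpace X] [TopologicalSpace Z] [Fintype Z]

/-- The operator `f ↦ ((x, z) ↦ ∑ l, f (x, l))`, whose values do not depend on `z`. It turns a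
hidden neuron into the sum-pooled neuron of a PointNet layer. -/
noncomputable def sumCoord : C(X × Z, ℝ) →L[ℝ] C(X × Z, ℝ) where
  toFun f := ∑ l, f.comp ⟨fun x => (x.1, l), by fun_prop⟩
  map_add' f g := by ext; simp [Finset.sum_add_distrib]
  map_smul' a f := by ext; simp [Finset.mul_sum]
  cont := continuous_finsetSum _ fun l _ => continuous_precomp _

variable {X Z}

lemma sumCoord_apply (f : C(X × Z, ℝ)) (x : X × Z) : sumCoord X Z f x = ∑ l, f (x.1, l) := by
  simp [sumCoord]

end SumCoord

variable {A Z : Type} [TopologicalSpace A] [TopologicalSpace Z]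

/-- The continuous functions on `K × Z` which are, in uncurried form, the restriction to `K` of a
map in `H`. -/
def uncurryOn (K : Set A) (H : Submodule ℝ (A → Z → ℝ)) : Submodule ℝ C(K × Z, ℝ) where
  carrier := {f | ∃ F ∈ H, ∀ x, f x = F x.1 x.2}
  zero_mem' := ⟨0, H.zero_mem, fun _ => rfl⟩
  add_mem' := by
    rintro f g ⟨F, hF, hf⟩ ⟨G, hG, hg⟩
    exact ⟨F + G, H.add_mem hF hG, fun x => by simp [hf, hg]⟩
  smul_mem' := by
    rintro c f ⟨F, hF, hf⟩
    exact ⟨c • F, H.smul_mem c hF, fun x => by simp [hf]⟩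

lemma mem_UnifClosure_of_mem_topologicalClosure_uncurryOn [Fintype Z]
    {H : Submodule ℝ (A → Z → ℝ)} {F : A → Z → ℝ}
    (hF : ∀ K : Set A, IsCompact K →
      ∃ f ∈ (uncurryOn K H).topologicalClosure, ∀ x, f x = F x.1 x.2) :
    F ∈ UnifClosure (H : Set (A → Z → ℝ)) := by
  intro K hK ε hε
  obtain ⟨f, hf, hfF⟩ := hF K hK
  have : CompactSpace K := isCompact_iff_compactSpace.1 hK
  obtain ⟨g, ⟨G, hG, hgG⟩, hd⟩ := Metric.mem_closure_iff.1 hf ε hε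
  refine ⟨G, hG, fun v hv => (dist_pi_lt_iff hε).2 fun z => ?_⟩
  simpa only [hfF, hgG] using (ContinuousMap.dist_lt_iff hε).1 hd (⟨v, hv⟩, z)

variable {K : Set A} {σ : C(ℝ, ℝ)} {M : Set ((Z → ℝ) → (Z → ℝ))} {S : Set (A → Z → ℝ)}
  {h : A → Z → ℝ} {u : C(K × Z, ℝ)}

lemma comp_mem_uncurryOn_layerSpan (hM : id ∈ M) (hh : h ∈ S) (hu : ∀ x, u x = h x.1 x.2) :
    σ.comp u ∈ uncurryOn K (layerSpan σ M S) :=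
  ⟨_, comp_act_comp_mem_layerSpan hM hh, fun x => congrArg σ (hu x)⟩

lemma sumCoord_comp_mem_uncurryOn_layerSpan [Fintype Z] (hM : (fun v _ => ∑ l, v l) ∈ M)
    (hh : h ∈ S) (hu : ∀ x, u x = h x.1 x.2) :
    sumCoord K Z (σ.comp u) ∈ uncurryOn K (layerSpan σ M S) :=
  ⟨_, comp_act_comp_mem_layerSpan hM hh, fun x => by
    simp only [sumCoord_apply, comp_apply, hu, act]⟩

lemma comp_mem_topologicalClosure_uncurryOn_layerSpan {H : Submodule ℝ (A → Z → ℝ)} (hM : id ∈ M)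
    (hu : u ∈ (uncurryOn K H).topologicalClosure) :
    σ.comp u ∈ (uncurryOn K (layerSpan σ M (H : Set _))).topologicalClosure :=
  map_mem_closure (continuous_postcomp σ) hu fun _ ⟨_, hF, hf⟩ =>
    comp_mem_uncurryOn_layerSpan hM hF hf

end Restriction

section ConvPointNet

open ContinuousMap

variable {n : ℕ}

lemma ConvC_subset_PointNetP (n : ℕ) : ConvC n ⊆ PointNetP n := by
  rintro _ ⟨a, b, rfl⟩
  exact ⟨a, 0, b, by simp⟩

lemma smul_mem_ConvC (c : ℝ) : ∀ f ∈ ConvC n, c • f ∈ ConvC n := by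
  rintro _ ⟨a, b, rfl⟩
  refine ⟨c * a, c * b, ?_⟩
  ext v i
  simp only [Pi.smul_apply, smul_eq_mul]
  ring

lemma smul_mem_PointNetP (c : ℝ) : ∀ f ∈ PointNetP n, c • f ∈ PointNetP n := by
  rintro _ ⟨a, d, b, rfl⟩
  refine ⟨c * a, c * d, c * b, ?_⟩
  ext v i
  simp only [Pi.smul_apply, smul_eq_mul]
  ring

lemma affine_mem_ConvC (w b : ℝ) : (fun v i => w * v i + b) ∈ ConvC n := ⟨w, b, rfl⟩

lemma id_mem_ConvC : id ∈ ConvC n := ⟨1, 0, by ext; simp⟩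

lemma sum_mem_PointNetP : (fun v _ => ∑ l, v l) ∈ PointNetP n := ⟨0, 1, 0, by simp⟩

lemma continuous_of_mem_PointNetP : ∀ f ∈ PointNetP n, Continuous f := by
  rintro _ ⟨a, c, b, rfl⟩
  fun_prop

lemma equivariant_of_mem_PointNetP : ∀ f ∈ PointNetP n, Equivariant (Equiv.Perm (Fin n)) f := by
  rintro _ ⟨a, c, b, rfl⟩ g v
  ext i
  simp only [pSMul, Equiv.Perm.smul_def, Equiv.sum_comp g⁻¹ v]

/-- The function `(v, i) ↦ v i`, the preactivation of a first-layer neuron of unit weight. -/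
def coordMap (K : Set (Fin n → ℝ)) : C(K × Fin n, ℝ) :=
  ⟨fun x => x.1.1 x.2, continuous_prod_of_discrete_right.2 fun i =>
    (continuous_apply i).comp continuous_subtype_val⟩

variable {K : Set (Fin n → ℝ)} [CompactSpace K] {σ : C(ℝ, ℝ)}

lemma comp_coordMap_mem_topologicalClosure (hσ : NotPolynomial σ) (p : C(ℝ, ℝ)) :
    p.comp (coordMap K) ∈
      (uncurryOn K (layerSpan σ (PointNetP n) (ConvC n))).topologicalClosure :=
  comp_mem_of_forall_comp_affine_mem hσ (Submodule.isClosed_topologicalClosure _)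
    (fun w b => Submodule.le_topologicalClosure _ <|
      comp_mem_uncurryOn_layerSpan (ConvC_subset_PointNetP n id_mem_ConvC) (affine_mem_ConvC w b)
        fun _ => rfl) p

lemma sumCoord_comp_coordMap_mem_topologicalClosure (hσ : NotPolynomial σ) (p : C(ℝ, ℝ)) :
    sumCoord K (Fin n) (p.comp (coordMap K)) ∈
      (uncurryOn K (layerSpan σ (PointNetP n) (ConvC n))).topologicalClosure := by
  set V := (uncurryOn K (layerSpan σ (PointNetP n) (ConvC n))).topologicalClosure
  have hV : IsClosed (V : Set C(K × Fin n, ℝ)) := Submodule.isClosed_topologicalClosure _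
  exact comp_mem_of_forall_comp_affine_mem (V := V.comap (sumCoord K (Fin n)).toLinearMap) hσ
    (hV.preimage (sumCoord K (Fin n)).continuous)
    (fun w b => Submodule.le_topologicalClosure _ <|
      sumCoord_comp_mem_uncurryOn_layerSpan sum_mem_PointNetP (affine_mem_ConvC w b)
        fun _ => rfl) p

lemma Equivariant.apply_eq_of_forall_mem_topologicalClosure {F : (Fin n → ℝ) → (Fin n → ℝ)}
    (hF : Equivariant (Equiv.Perm (Fin n)) F) (hσ : NotPolynomial σ) {x y : K × Fin n}
    (hxy : ∀ u ∈ (uncurryOn K (layerSpan σ (PointNetP n) (ConvC n))).topologicalClosure,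
      u x = u y) : F x.1 x.2 = F y.1 y.2 := by
  obtain ⟨⟨v, hv⟩, i⟩ := x
  obtain ⟨⟨w, hw⟩, j⟩ := y
  have hcoord : v i = w j := hxy _ (comp_coordMap_mem_topologicalClosure hσ (.id ℝ))
  obtain ⟨e, rfl⟩ : ∃ e : Equiv.Perm (Fin n), w ∘ e = v :=
    exists_perm_comp_eq_of_sum_eval_eq fun p => by
      simpa only [sumCoord_apply, coordMap, comp_apply, coe_mk] using
        hxy _ (sumCoord_comp_coordMap_mem_topologicalClosure hσ ⟨p.eval, p.continuous⟩)
  calc F (w ∘ e) i = F w (e i) := congrFun (hF.map_comp_perm e w) i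
    _ = F w j := hF.apply_eq_of_apply_eq hcoord

theorem mem_UClass3_of_continuous_of_equivariant (hσ : NotPolynomial σ)
    {F : (Fin n → ℝ) → (Fin n → ℝ)} (hFc : Continuous F)
    (hF : Equivariant (Equiv.Perm (Fin n)) F) :
    F ∈ UClass3 σ (ConvC n) (PointNetP n) (ConvC n) := by
  refine UnifClosure_mono (fun G => mem_threeLayerNetworks_of_mem_layerSpan_layerSpan
    smul_mem_PointNetP smul_mem_ConvC) <|
    mem_UnifClosure_of_mem_topologicalClosure_uncurryOn fun K hK => ?_
  have : CompactSpace K := isCompact_iff_compactSpace.1 hK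
  let f : C(K × Fin n, ℝ) := ⟨fun x => F x.1 x.2, continuous_prod_of_discrete_right.2 fun i =>
    (continuous_apply i).comp (hFc.comp continuous_subtype_val)⟩
  refine ⟨f, mem_of_forall_comp_mem_of_forall_eq_imp_eq hσ
    (comp_coordMap_mem_topologicalClosure hσ 1) (Submodule.isClosed_topologicalClosure _)
    (fun u hu => comp_mem_topologicalClosure_uncurryOn_layerSpan id_mem_ConvC hu)
    fun x y hxy => hF.apply_eq_of_forall_mem_topologicalClosure hσ hxy, fun _ => rfl⟩

end ConvPointNet

/-- Remark `rmk:subopt-threshold`, recovering Segol–Lipman: for `σ`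
continuous and not a polynomial, `U(C, P, C) = U(P, P, P) = C_{S_n}(ℝ^n, ℝ^n)`, the space
of all continuous `S_n`-equivariant maps `ℝ^n → ℝ^n`. -/
theorem UCPC_eq_UPPP_eq_equivariant_continuous
    (n : ℕ) (hn : 1 ≤ n) (σ : ℝ → ℝ) (hσc : Continuous σ) (hσp : NotPolynomial σ) :
    UClass3 σ (ConvC n) (PointNetP n) (ConvC n)
        = UClass3 σ (PointNetP n) (PointNetP n) (PointNetP n) ∧
    UClass3 σ (ConvC n) (PointNetP n) (ConvC n)
        = { F : (Fin n → ℝ) → (Fin n → ℝ) | Continuous F ∧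
            ∀ (g : Equiv.Perm (Fin n)) (v : Fin n → ℝ),
              F (fun i => v (g⁻¹ i)) = fun i => F v (g⁻¹ i) } := by
  have hsub := ConvC_subset_PointNetP n
  have hUCPC_UPPP := UClass3_mono (σ := σ) hsub (subset_refl (PointNetP n)) hsub
  have hUPPP {F} (hF : F ∈ UClass3 σ (PointNetP n) (PointNetP n) (PointNetP n)) :
      Continuous F ∧ Equivariant (Equiv.Perm (Fin n)) F :=
    ⟨continuous_of_mem_UClass3 hσc continuous_of_mem_PointNetP continuous_of_mem_PointNetP
      continuous_of_mem_PointNetP hF,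
     equivariant_of_mem_UClass3 equivariant_of_mem_PointNetP equivariant_of_mem_PointNetP
       equivariant_of_mem_PointNetP hF⟩
  have hUCPC {F} (hF : Continuous F ∧ Equivariant (Equiv.Perm (Fin n)) F) :
      F ∈ UClass3 σ (ConvC n) (PointNetP n) (ConvC n) :=
    mem_UClass3_of_continuous_of_equivariant (σ := ⟨σ, hσc⟩) hσp hF.1 hF.2
  exact ⟨hUCPC_UPPP.antisymm fun _ hF => hUCPC (hUPPP hF),
    Set.Subset.antisymm (fun _ hF => hUPPP (hUCPC_UPPP hF)) fun _ hF => hUCPC hF⟩
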